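/- Let X be a real Banach space and let δ, δ₀, c₀, r₀ > 0. Let μ : [0,∞) → (0,∞) be continuously differentiable with μ′(s) + δ μ(s) ≤ 0 for all s ≥ 0. Let f : [0,∞) → X be continuous and satisfy ‖f(r)‖² ≤ c₀ e^{δ₀ r} for all r ≥ r₀. For ε > 0 set μ_ε(s) = ε^{−2} μ(s/ε). Then limsup_{ε → 0⁺} ∫₀^∞ μ_ε(s) ‖∫₀ˢ f(r) dr‖² ds < ∞, where the inner integral is a Bochner integral. -/

import Mathlib

open MeasureTheory Filter
open scoped ENNReal Topology

/-!
By Grönwall `μ s ≤ μ 0 * exp (-δ s)`, and a trajectory of size `exp (δ₀ r)` has an antiderivative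
`F` of size `s * exp (δ₀ s)`; note the factor `s`, which comes from `F 0 = 0`. It cancels the
singular scaling: the integrand `ε⁻² μ (s / ε) ‖F s‖²` is at most a constant times
`ε⁻² s² exp (-(δ / ε - 2 δ₀) s)`, and its integral is at most a constant times
`ε / (δ - 2 δ₀ ε) ^ 3`. The energies therefore not only stay bounded but vanish in the limit.
-/

open Set Asymptotics

/-- The memory energy `∫₀^∞ μ_ε(s) ‖F s‖² ds` of a past history `F`, for the rescaled kernel
`μ_ε(s) = ε⁻² μ(s / ε)`. It is a lower Lebesgue integral, so that divergence is the value `⊤`;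
negative values of `μ` are truncated to `0`. -/
noncomputable def rescaledMemoryEnergy {E : Type*} [Norm E] (μ : ℝ → ℝ) (F : ℝ → E) (ε : ℝ) :
    ℝ≥0∞ :=
  ∫⁻ s in Ioi (0 : ℝ), ENNReal.ofReal ((1 / ε ^ 2) * μ (s / ε) * ‖F s‖ ^ 2)

theorem le_mul_exp_of_deriv_right_le_mul {u u' : ℝ → ℝ} {k a x : ℝ} (hu : ContinuousOn u (Ici a))
    (hu' : ∀ y, a ≤ y → HasDerivWithinAt u (u' y) (Ici y) y) (hle : ∀ y, a ≤ y → u' y ≤ k * u y)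
    (hx : a ≤ x) : u x ≤ u a * Real.exp (k * (x - a)) := by
  rw [← gronwallBound_ε0]
  exact le_gronwallBound_of_liminf_deriv_right_le (b := x) (hu.mono Icc_subset_Ici_self)
    (fun y hy _ hr ↦ (hu' y hy.1).liminf_right_slope_le hr) le_rfl
    (fun y hy ↦ by simpa using hle y hy.1) x (right_mem_Icc.2 hx)

theorem isBigO_exp_neg_of_deriv_add_mul_nonpos {μ μ' : ℝ → ℝ} {δ : ℝ}
    (hnonneg : ∀ s, 0 ≤ s → 0 ≤ μ s)
    (hderiv : ∀ s, 0 ≤ s → HasDerivWithinAt μ (μ' s) (Ici 0) s)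
    (hdiss : ∀ s, 0 ≤ s → μ' s + δ * μ s ≤ 0) :
    μ =O[𝓟 (Ici 0)] fun s ↦ Real.exp (-(δ * s)) := by
  refine isBigO_principal.2 ⟨μ 0, fun s hs ↦ ?_⟩
  have hdecay : μ s ≤ μ 0 * Real.exp (-δ * (s - 0)) :=
    le_mul_exp_of_deriv_right_le_mul (fun y hy ↦ (hderiv y hy).continuousWithinAt)
      (fun y hy ↦ (hderiv y hy).mono (Ici_subset_Ici.2 hy))
      (fun y hy ↦ by linarith [hdiss y hy]) hs
  simpa [abs_of_nonneg (hnonneg s hs)] using hdecay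

theorem isBigO_exp_half_of_norm_sq_le {E : Type*} [SeminormedAddCommGroup E] {f : ℝ → E}
    {c δ₀ : ℝ} (h : ∀ᶠ r in atTop, ‖f r‖ ^ 2 ≤ c * Real.exp (δ₀ * r)) :
    f =O[atTop] fun r ↦ Real.exp (δ₀ / 2 * r) := by
  refine IsBigO.of_norm_left (IsBigO.of_pow two_ne_zero (IsBigO.of_bound c ?_))
  filter_upwards [h] with r hr
  have hexp : Real.exp (δ₀ / 2 * r) ^ 2 = Real.exp (δ₀ * r) := by
    rw [← Real.exp_nat_mul]
    ring_nf
  simpa [hexp] using hr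

theorem isBigO_principal_Ici_of_isBigO_atTop {α E F : Type*} [LinearOrder α] [TopologicalSpace α]
    [CompactIccSpace α] [SeminormedAddCommGroup E] [NormedAddCommGroup F] {f : α → E} {g : α → F}
    {a : α} (hf : ContinuousOn f (Ici a)) (hg : ContinuousOn g (Ici a))
    (hg₀ : ∀ x, a ≤ x → g x ≠ 0) (h : f =O[atTop] g) : f =O[𝓟 (Ici a)] g := by
  obtain ⟨C, hC⟩ := h.bound
  have : Nonempty α := ⟨a⟩
  obtain ⟨b, hb⟩ := eventually_atTop.1 hC
  have hcompact : f =O[𝓟 (Icc a b)] g :=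
    ((hf.mono Icc_subset_Ici_self).isBigO_principal isCompact_Icc (c := (1 : ℝ)) (by simp)).trans
      ((hg.mono Icc_subset_Ici_self).isBigO_rev_principal isCompact_Icc
        (fun x hx ↦ hg₀ x hx.1) 1)
  have htail : f =O[𝓟 (Ici b)] g := isBigO_principal.2 ⟨C, hb⟩
  refine (hcompact.sup htail).mono ?_
  rw [sup_principal, principal_mono]
  exact Ici_subset_Icc_union_Ici

theorem isBigO_intervalIntegral_of_monotoneOn {E : Type*} [NormedAddCommGroup E] [NormedSpace ℝ E]
    {f : ℝ → E} {g : ℝ → ℝ} {a : ℝ} (hg : MonotoneOn g (Ici a)) (hg₀ : ∀ r, a ≤ r → 0 ≤ g r)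
    (hf : f =O[𝓟 (Ici a)] g) :
    (fun s ↦ ∫ r in a..s, f r) =O[𝓟 (Ici a)] fun s ↦ (s - a) * g s := by
  obtain ⟨K, hK₀, hK⟩ := hf.exists_nonneg
  rw [isBigOWith_principal] at hK
  refine isBigO_principal.2 ⟨K, fun s (hs : a ≤ s) ↦ ?_⟩
  have hbound : ∀ r ∈ uIoc a s, ‖f r‖ ≤ K * g s := fun r hr ↦ by
    rw [uIoc_of_le hs] at hr
    calc ‖f r‖ ≤ K * ‖g r‖ := hK r hr.1.le
      _ = K * g r := by rw [Real.norm_of_nonneg (hg₀ r hr.1.le)]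
      _ ≤ K * g s := by gcongr; exact hg hr.1.le hs hr.2
  calc ‖∫ r in a..s, f r‖ ≤ K * g s * |s - a| :=
        intervalIntegral.norm_integral_le_of_norm_le_const hbound
    _ = K * ‖(s - a) * g s‖ := by
        rw [norm_mul, Real.norm_eq_abs, Real.norm_of_nonneg (hg₀ s hs)]
        ring

theorem lintegral_pow_mul_exp_neg_mul_Ioi (n : ℕ) {r : ℝ} (hr : 0 < r) :
    ∫⁻ t in Ioi (0 : ℝ), ENNReal.ofReal (t ^ n * Real.exp (-(r * t))) =
      ENNReal.ofReal (n.factorial / r ^ (n + 1)) := by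
  have hintegral : ∫ t in Ioi (0 : ℝ), t ^ n * Real.exp (-(r * t)) = n.factorial / r ^ (n + 1) := by
    have h := Real.integral_rpow_mul_exp_neg_mul_Ioi (a := n + 1) (by positivity) hr
    rw [Real.Gamma_nat_eq_factorial, add_sub_cancel_right] at h
    simp only [Real.rpow_natCast] at h
    rw [h]
    norm_cast
    rw [one_div, inv_pow, inv_mul_eq_div]
  have hintegrable : IntegrableOn (fun t : ℝ ↦ t ^ n * Real.exp (-(r * t))) (Ioi 0) :=
    Integrable.of_integral_ne_zero (by rw [hintegral]; positivity)
  rw [← hintegral, ofReal_integral_eq_lintegral_ofReal hintegrable]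
  filter_upwards [ae_restrict_mem measurableSet_Ioi] with t (ht : 0 < t)
  positivity

section RescaledMemoryEnergy

variable {E : Type*} [SeminormedAddCommGroup E] {μ : ℝ → ℝ} {F : ℝ → E} {δ δ₀ : ℝ}

theorem rescaledMemoryEnergy_le {M K ε : ℝ} (hM : 0 ≤ M)
    (hμ : ∀ s, 0 < s → μ s ≤ M * Real.exp (-(δ * s)))
    (hF : ∀ s, 0 < s → ‖F s‖ ≤ K * (s * Real.exp (δ₀ * s))) (hε : 0 < ε) (hεδ : 2 * δ₀ * ε < δ) :
    rescaledMemoryEnergy μ F ε ≤ ENNReal.ofReal (2 * M * K ^ 2 * ε / (δ - 2 * δ₀ * ε) ^ 3) := by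
  set ρ : ℝ := δ / ε - 2 * δ₀ with hρ
  have hρ_eq : ρ = (δ - 2 * δ₀ * ε) / ε := by rw [hρ]; field_simp
  have hρ_pos : 0 < ρ := by rw [hρ_eq]; exact div_pos (sub_pos.2 hεδ) hε
  have hpointwise : ∀ s ∈ Ioi (0 : ℝ), (1 / ε ^ 2) * μ (s / ε) * ‖F s‖ ^ 2 ≤
      M * K ^ 2 / ε ^ 2 * (s ^ 2 * Real.exp (-(ρ * s))) := fun s (hs : 0 < s) ↦ by
    have hexp : Real.exp (-(ρ * s)) = Real.exp (-(δ * (s / ε))) * Real.exp (δ₀ * s) ^ 2 := by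
      rw [← Real.exp_nat_mul, ← Real.exp_add, hρ]
      ring_nf
    calc (1 / ε ^ 2) * μ (s / ε) * ‖F s‖ ^ 2
        ≤ (1 / ε ^ 2) * (M * Real.exp (-(δ * (s / ε)))) * (K * (s * Real.exp (δ₀ * s))) ^ 2 := by
          gcongr
          exacts [hμ _ (div_pos hs hε), hF s hs]
      _ = M * K ^ 2 / ε ^ 2 * (s ^ 2 * Real.exp (-(ρ * s))) := by rw [hexp]; ring
  calc rescaledMemoryEnergy μ F ε
      ≤ ∫⁻ s in Ioi (0 : ℝ),
          ENNReal.ofReal (M * K ^ 2 / ε ^ 2 * (s ^ 2 * Real.exp (-(ρ * s)))) :=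
        setLIntegral_mono' measurableSet_Ioi fun s hs ↦
          ENNReal.ofReal_le_ofReal (hpointwise s hs)
    _ = ENNReal.ofReal (M * K ^ 2 / ε ^ 2) * ENNReal.ofReal (Nat.factorial 2 / ρ ^ 3) := by
        simp only [ENNReal.ofReal_mul (show 0 ≤ M * K ^ 2 / ε ^ 2 by positivity)]
        rw [lintegral_const_mul' _ _ ENNReal.ofReal_ne_top,
          lintegral_pow_mul_exp_neg_mul_Ioi 2 hρ_pos]
    _ = ENNReal.ofReal (2 * M * K ^ 2 * ε / (δ - 2 * δ₀ * ε) ^ 3) := by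
        rw [← ENNReal.ofReal_mul (by positivity), Nat.factorial_two, hρ_eq]
        have := sub_pos.2 hεδ
        congr 1
        field_simp
        norm_num

theorem tendsto_rescaledMemoryEnergy_nhdsGT_zero (hδ : 0 < δ)
    (hμ : μ =O[𝓟 (Ici 0)] fun s ↦ Real.exp (-(δ * s)))
    (hF : F =O[𝓟 (Ici 0)] fun s ↦ s * Real.exp (δ₀ * s)) :
    Tendsto (rescaledMemoryEnergy μ F) (𝓝[>] 0) (𝓝 0) := by
  obtain ⟨M, hM₀, hM⟩ := hμ.exists_nonneg
  obtain ⟨K, hK⟩ := isBigO_principal.1 hF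
  rw [isBigOWith_principal] at hM
  have hμ_le : ∀ s, 0 < s → μ s ≤ M * Real.exp (-(δ * s)) := fun s hs ↦ by
    simpa using (le_abs_self _).trans (hM s hs.le)
  have hF_le : ∀ s, 0 < s → ‖F s‖ ≤ K * (s * Real.exp (δ₀ * s)) := fun s hs ↦ by
    simpa [abs_of_pos hs] using hK s hs.le
  have hsmall : ∀ᶠ ε in 𝓝[>] (0 : ℝ), 2 * δ₀ * ε < δ :=
    nhdsWithin_le_nhds <| (continuous_const_mul (2 * δ₀)).tendsto 0 |>.eventually_lt_const
      (by simpa using hδ)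
  have hbound : Tendsto (fun ε ↦ ENNReal.ofReal (2 * M * K ^ 2 * ε / (δ - 2 * δ₀ * ε) ^ 3))
      (𝓝[>] 0) (𝓝 0) := by
    have hcont : ContinuousAt (fun ε ↦ 2 * M * K ^ 2 * ε / (δ - 2 * δ₀ * ε) ^ 3) 0 :=
      ContinuousAt.div (by fun_prop) (by fun_prop) (by simpa using hδ.ne')
    simpa using ENNReal.tendsto_ofReal (hcont.tendsto.mono_left nhdsWithin_le_nhds)
  refine tendsto_of_tendsto_of_tendsto_of_le_of_le' tendsto_const_nhds hbound
    (Eventually.of_forall fun _ ↦ zero_le) ?_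
  filter_upwards [self_mem_nhdsWithin, hsmall] with ε hε hεδ
  exact rescaledMemoryEnergy_le hM₀ hμ_le hF_le hε hεδ

end RescaledMemoryEnergy

theorem limsup_rescaled_memory_energy_lt_top_general
    {X : Type*} [NormedAddCommGroup X] [NormedSpace ℝ X] [CompleteSpace X]
    {δ δ₀ : ℝ} (hδ : 0 < δ) (hδ₀ : 0 ≤ δ₀) {μ : ℝ → ℝ} {f : ℝ → X}
    (hμ : μ =O[𝓟 (Ici 0)] fun s ↦ Real.exp (-(δ * s)))
    (hf : ContinuousOn f (Ici 0)) (hgrow : f =O[atTop] fun r ↦ Real.exp (δ₀ * r)) :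
    Tendsto (rescaledMemoryEnergy μ fun s ↦ ∫ r in (0 : ℝ)..s, f r) (𝓝[>] 0) (𝓝 0) := by
  have hf_le : f =O[𝓟 (Ici 0)] fun r ↦ Real.exp (δ₀ * r) :=
    isBigO_principal_Ici_of_isBigO_atTop hf (by fun_prop) (fun r _ ↦ Real.exp_ne_zero _) hgrow
  have hmono : Monotone fun r ↦ Real.exp (δ₀ * r) := fun r s hrs ↦ by dsimp only; gcongr
  refine tendsto_rescaledMemoryEnergy_nhdsGT_zero (δ₀ := δ₀) hδ hμ ?_
  simpa using isBigO_intervalIntegral_of_monotoneOn (hmono.monotoneOn _)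
    (fun r _ ↦ (Real.exp_pos _).le) hf_le

/-- For an exponentially decaying memory kernel `μ` and a continuous
trajectory `f` with at most exponential-square growth, the rescaled-kernel energies
`∫₀^∞ μ_ε(s) ‖∫₀ˢ f(r) dr‖² ds`, where `μ_ε(s) = ε⁻² μ(s/ε)`, remain bounded in the
limit `ε → 0⁺`. -/
theorem limsup_rescaled_memory_energy_lt_top
    {X : Type*} [NormedAddCommGroup X] [NormedSpace ℝ X] [CompleteSpace X]
    (δ δ₀ c₀ r₀ : ℝ) (hδ : 0 < δ) (hδ₀ : 0 < δ₀) (hc₀ : 0 < c₀) (hr₀ : 0 < r₀)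
    (μ μ' : ℝ → ℝ)
    (hpos : ∀ s, 0 ≤ s → 0 < μ s)
    (hderiv : ∀ s, 0 ≤ s → HasDerivAt μ (μ' s) s)
    (hcont : ContinuousOn μ' (Set.Ici 0))
    (hdiss : ∀ s, 0 ≤ s → μ' s + δ * μ s ≤ 0)
    (f : ℝ → X) (hf : Continuous f)
    (hgrow : ∀ r, r₀ ≤ r → ‖f r‖ ^ 2 ≤ c₀ * Real.exp (δ₀ * r)) :
    Filter.limsup
      (fun ε : ℝ =>
        ∫⁻ s in Set.Ioi (0 : ℝ),
          ENNReal.ofReal ((1 / ε ^ 2) * μ (s / ε) * ‖∫ r in (0 : ℝ)..s, f r‖ ^ 2))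
      (𝓝[>] (0 : ℝ)) < ⊤ := by
  have hμ : μ =O[𝓟 (Ici 0)] fun s ↦ Real.exp (-(δ * s)) :=
    isBigO_exp_neg_of_deriv_add_mul_nonpos (fun s hs ↦ (hpos s hs).le)
      (fun s hs ↦ (hderiv s hs).hasDerivWithinAt) hdiss
  have hf_exp : f =O[atTop] fun r ↦ Real.exp (δ₀ / 2 * r) :=
    isBigO_exp_half_of_norm_sq_le ((eventually_ge_atTop r₀).mono hgrow)
  exact (limsup_rescaled_memory_energy_lt_top_general hδ (half_pos hδ₀).le hμ hf.continuousOn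
    hf_exp).limsup_eq.trans_lt ENNReal.zero_lt_top
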